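/- arXiv:1609.04874 — 5 statements merged into one kernel-verified Lean document; each statement's English description precedes it below -/
import Mathlib

section
/- Let G be a group and let S₂, S₁, S₀ be G-sets on which G acts freely and with finitely many orbits. Let φ : ℤ[S₂] → ℤ[S₁] and ψ : ℤ[S₁] → ℤ[S₀] be G-equivariant additive homomorphisms such that ψ ∘ φ = 0 and ker ψ ⊆ im φ. Then for every natural number n there exists a natural number B such that every x ∈ ℤ[S₁] with ψ(x) = 0 and ‖x‖_{S₁} ≤ n admits y ∈ ℤ[S₂] with φ(y) = x and ‖y‖_{S₂} ≤ B. (This is the statement that the (d+1)-dimensional filling function FV_M^{d+1} of a ℤG-module M of type FP_{d+1} takes only finite values, expressed via a partial resolution of M by finitely generated free ℤG-modules, which are exactly permutation modules on free G-sets with finitely many orbits.) -/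
open Finsupp

/-- Action of `g : G` on the permutation module `ℤ[S]`, permuting the basis. -/
def gact {G S : Type*} [Group G] [MulAction G S] (g : G) (x : S →₀ ℤ) : S →₀ ℤ :=
  Finsupp.equivMapDomain (MulAction.toPerm g) x

/-- The ℓ1-norm on `ℤ[S]`. -/
def l1 {S : Type*} (x : S →₀ ℤ) : ℕ := x.support.sum fun s => (x s).natAbs

/-- `x` is a part of `y`, written `x ⪯_S y`. -/
def IsPart {S : Type*} (x y : S →₀ ℤ) : Prop := ∀ s, x s ^ 2 ≤ x s * y s

/-- `x` and `y` have trivial S-intersection. -/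
def SIntTrivial {S : Type*} (x y : S →₀ ℤ) : Prop := ∀ s, 0 ≤ x s * y s

/-- membership in `D₁ = S ∪ (-S) ⊆ ℤ[S]`. -/
def InD1 {S : Type*} (x : S →₀ ℤ) : Prop :=
  ∃ s, x = Finsupp.single s 1 ∨ x = Finsupp.single s (-1)

/-- `x` and `y` have nontrivial ρ-intersection. -/
def RhoInt {S T : Type*} (ρ : (S →₀ ℤ) →+ (T →₀ ℤ)) (x y : S →₀ ℤ) : Prop :=
  ∃ x₁ y₁, InD1 x₁ ∧ InD1 y₁ ∧ IsPart x₁ x ∧ IsPart y₁ y ∧ ∃ t, ρ x₁ t * ρ y₁ t < 0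

/-- membership in `D_n`. -/
def InD {S T : Type*} (ρ : (S →₀ ℤ) →+ (T →₀ ℤ)) (n : ℕ) (x : S →₀ ℤ) : Prop :=
  ∃ c : ℕ → (S →₀ ℤ), (∀ i < n, InD1 (c i)) ∧ x = ∑ i ∈ Finset.range n, c i ∧
    ∀ k, 1 ≤ k → k < n →
      SIntTrivial (∑ i ∈ Finset.range k, c i) (c k) ∧
      RhoInt ρ (∑ i ∈ Finset.range k, c i) (c k)

/-- `x` is ρ-connected. -/
def RhoConnected {S T : Type*} (ρ : (S →₀ ℤ) →+ (T →₀ ℤ)) (x : S →₀ ℤ) : Prop :=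
  ∃ n, 1 ≤ n ∧ InD ρ n x

/-- `ρ` is G-equivariant. -/
def Equivariant (G : Type*) {S T : Type*} [Group G] [MulAction G S] [MulAction G T]
    (ρ : (S →₀ ℤ) →+ (T →₀ ℤ)) : Prop :=
  ∀ (g : G) (x : S →₀ ℤ), ρ (gact g x) = gact g (ρ x)

/-- `S` has finitely many G-orbits. -/
def FinitelyManyOrbits (G S : Type*) [Group G] [MulAction G S] : Prop :=
  ∃ R : Finset S, ∀ s : S, ∃ (g : G) (r : S), r ∈ R ∧ g • r = s

/-- every element of `T` has finite stabilizer. -/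
def FiniteStabilizers (G T : Type*) [Group G] [MulAction G T] : Prop :=
  ∀ t : T, {g : G | g • t = t}.Finite


open Classical in
theorem aux_supp {S T : Type*} (ψ : (S →₀ ℤ) →+ (T →₀ ℤ)) (x : S →₀ ℤ) (t : T)
    (h : ψ x t ≠ 0) : ∃ s, x s ≠ 0 ∧ ψ (Finsupp.single s 1) t ≠ 0 := by
  by_contra! hc
  apply h
  have hx : x = ∑ s ∈ x.support, x s • Finsupp.single s (1 : ℤ) := by
    conv_lhs => rw [← Finsupp.sum_single x]
    simp [Finsupp.sum]
  rw [hx, map_sum, Finsupp.finsetSum_apply]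
  apply Finset.sum_eq_zero
  intro s hs
  rw [map_zsmul, Finsupp.smul_apply, hc s (Finsupp.mem_support_iff.1 hs), smul_zero]

theorem aux_gact_apply {G S : Type*} [Group G] [MulAction G S] (g : G) (x : S →₀ ℤ) (s : S) :
    gact g x s = x (g⁻¹ • s) := rfl

theorem aux_gact_inv {G S : Type*} [Group G] [MulAction G S] (g : G) (x : S →₀ ℤ) :
    gact g (gact g⁻¹ x) = x := by
  ext s
  simp [aux_gact_apply]

theorem aux_gact_zero {G S : Type*} [Group G] [MulAction G S] (g : G) :
    gact g (0 : S →₀ ℤ) = 0 := by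
  ext s
  simp [aux_gact_apply]

theorem aux_gact_single {G S : Type*} [Group G] [MulAction G S] (g : G) (s : S) (c : ℤ) :
    gact g (Finsupp.single s c) = Finsupp.single (g • s) c := by
  simp [gact, Finsupp.equivMapDomain_single]

theorem aux_l1_gact {G S : Type*} [Group G] [MulAction G S] (g : G) (x : S →₀ ℤ) :
    l1 (gact g x) = l1 x := by
  unfold l1 gact
  exact Finsupp.sum_equivMapDomain (MulAction.toPerm g) x (fun _ c => c.natAbs)

open Classical in
theorem aux_l1_eq {S : Type*} (x : S →₀ ℤ) (F : Finset S) (h : x.support ⊆ F) :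
    l1 x = ∑ s ∈ F, (x s).natAbs := by
  unfold l1
  apply Finset.sum_subset h
  intro s _ hs
  simpa using hs

open Classical in
theorem aux_l1_add {S : Type*} (x y : S →₀ ℤ) : l1 (x + y) ≤ l1 x + l1 y := by
  rw [aux_l1_eq (x + y) (x.support ∪ y.support) Finsupp.support_add,
    aux_l1_eq x (x.support ∪ y.support) Finset.subset_union_left,
    aux_l1_eq y (x.support ∪ y.support) Finset.subset_union_right, ← Finset.sum_add_distrib]
  apply Finset.sum_le_sum
  intro s _
  exact Int.natAbs_add_le _ _

theorem aux_l1_filter {S : Type*} (x : S →₀ ℤ) (p : S → Prop) [DecidablePred p] :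
    l1 x = l1 (x.filter p) + l1 (x.filter fun s => ¬ p s) := by
  have h1 : (x.filter p).support ⊆ x.support := by
    rw [Finsupp.support_filter]
    exact Finset.filter_subset _ _
  have h2 : (x.filter fun s => ¬ p s).support ⊆ x.support := by
    rw [Finsupp.support_filter]
    exact Finset.filter_subset _ _
  rw [aux_l1_eq _ _ h1, aux_l1_eq _ _ h2, ← Finset.sum_add_distrib]
  apply Finset.sum_congr rfl
  intro s _
  by_cases h : p s <;> simp [Finsupp.filter_apply, h]

theorem aux_le_l1 {S : Type*} (x : S →₀ ℤ) (s : S) : (x s).natAbs ≤ l1 x := by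
  by_cases h : s ∈ x.support
  · exact Finset.single_le_sum (f := fun s => (x s).natAbs) (fun _ _ => Nat.zero_le _) h
  · simp [Finsupp.notMem_support_iff.1 h]

theorem aux_card_le {S : Type*} (x : S →₀ ℤ) : x.support.card ≤ l1 x := by
  unfold l1
  rw [Finset.card_eq_sum_ones]
  apply Finset.sum_le_sum
  intro s hs
  have := Finsupp.mem_support_iff.1 hs
  omega

theorem aux_finite_t {G S T : Type*} [Group G] [MulAction G S] [MulAction G T]
    (hfree : ∀ g : G, g ≠ 1 → ∀ t : T, g • t ≠ t) (horb : FinitelyManyOrbits G S)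
    (ψ : (S →₀ ℤ) →+ (T →₀ ℤ)) (hψ : Equivariant G ψ) (t : T) :
    {s : S | ψ (Finsupp.single s 1) t ≠ 0}.Finite := by
  obtain ⟨R, hR⟩ := horb
  have hfin : ∀ r : S, {g : G | ψ (Finsupp.single r 1) (g⁻¹ • t) ≠ 0}.Finite := by
    intro r
    have h1 : ((ψ (Finsupp.single r 1)).support : Set T).Finite := Finset.finite_toSet _
    refine (h1.preimage (f := fun g : G => g⁻¹ • t) ?_).subset ?_
    · intro a _ b _ hab
      by_contra hne
      have hab' : a⁻¹ • t = b⁻¹ • t := hab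
      refine hfree (b * a⁻¹) ?_ t ?_
      · intro h
        exact hne (mul_inv_eq_one.1 h).symm
      · rw [mul_smul, hab', smul_inv_smul]
    · intro g hg
      simpa using hg
  refine ((R.finite_toSet.biUnion fun r _ => (hfin r).image fun g => g • r)).subset ?_
  intro s hs
  obtain ⟨g, r, hr, rfl⟩ := hR s
  simp only [Set.mem_iUnion]
  refine ⟨r, hr, g, ?_, rfl⟩
  have hs' : ψ (Finsupp.single (g • r) 1) t ≠ 0 := hs
  rw [← aux_gact_single, hψ, aux_gact_apply] at hs'
  exact hs'

open Classical in
theorem aux_nbr {S T : Type*} (ψ : (S →₀ ℤ) →+ (T →₀ ℤ))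
    (hfin : ∀ t, {s : S | ψ (Finsupp.single s 1) t ≠ 0}.Finite) (F : Finset S) :
    ∃ N : Finset S, ∀ s ∈ F, ∀ s' t, ψ (Finsupp.single s 1) t ≠ 0 →
      ψ (Finsupp.single s' 1) t ≠ 0 → s' ∈ N := by
  refine ⟨F.biUnion fun s => (ψ (Finsupp.single s 1)).support.biUnion fun t => (hfin t).toFinset,
    ?_⟩
  intro s hs s' t h h'
  simp only [Finset.mem_biUnion]
  exact ⟨s, hs, t, Finsupp.mem_support_iff.2 h, by simpa using h'⟩

open Classical in
theorem aux_grow {S T : Type*} (ψ : (S →₀ ℤ) →+ (T →₀ ℤ))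
    (hfin : ∀ t, {s : S | ψ (Finsupp.single s 1) t ≠ 0}.Finite) (m : ℕ) :
    ∀ F : Finset S, ∃ F' : Finset S, ∀ x : S →₀ ℤ, ψ x = 0 → (x.support \ F).card ≤ m →
      ∃ A : Finset S, F ⊆ A ∧ A ⊆ F' ∧ ψ (x.filter (· ∈ A)) = 0 := by
  induction m with
  | zero =>
    intro F
    refine ⟨F, fun x hx hc => ⟨F, subset_rfl, subset_rfl, ?_⟩⟩
    have hsub : x.support ⊆ F := by
      rw [← Finset.sdiff_eq_empty_iff_subset]
      exact Finset.card_eq_zero.1 (by omega)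
    rw [Finsupp.filter_eq_self_iff _ x |>.2 fun s hs => hsub (Finsupp.mem_support_iff.2 hs), hx]
  | succ m ih =>
    intro F
    obtain ⟨N, hN⟩ := aux_nbr ψ hfin F
    obtain ⟨F', hF'⟩ := ih (F ∪ N)
    refine ⟨F' ∪ F, fun x hx hc => ?_⟩
    by_cases h : ∃ s, s ∈ x.support ∧ s ∈ N ∧ s ∉ F
    · obtain ⟨s, hs, hsN, hsF⟩ := h
      have hlt : (x.support \ (F ∪ N)).card < (x.support \ F).card := by
        apply Finset.card_lt_card
        refine Finset.ssubset_iff_of_subset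
          (Finset.sdiff_subset_sdiff subset_rfl Finset.subset_union_left) |>.2 ⟨s, ?_, ?_⟩
        · simp [hsF]; simpa using hs
        · simp [hsN]
      obtain ⟨A, h1, h2, h3⟩ := hF' x hx (by omega)
      exact ⟨A, Finset.subset_union_left.trans h1, h2.trans Finset.subset_union_left, h3⟩
    · push Not at h
      refine ⟨F, subset_rfl, Finset.subset_union_right, ?_⟩
      ext t
      by_contra hne
      rw [Finsupp.zero_apply] at hne
      have hsum : ψ (x.filter (· ∈ F)) t + ψ (x.filter fun s => ¬ s ∈ F) t = 0 := by
        rw [← Finsupp.add_apply, ← map_add, Finsupp.filter_add_filter_not, hx,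
          Finsupp.zero_apply]
      obtain ⟨s, hs, hst⟩ := aux_supp ψ _ t hne
      obtain ⟨s', hs', hst'⟩ := aux_supp ψ (x.filter fun s => ¬ s ∈ F) t (by omega)
      have hsF : s ∈ F := by
        by_contra hc
        exact hs (Finsupp.filter_apply_neg _ _ hc)
      have hsF' : s' ∉ F := by
        intro hc
        exact hs' (Finsupp.filter_apply_neg _ _ (not_not.2 hc))
      rw [Finsupp.filter_apply_pos (fun s => ¬ s ∈ F) _ hsF'] at hs'
      exact hsF' (h s' (Finsupp.mem_support_iff.2 hs') (hN s hsF s' t hst hst'))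

/-- Finiteness of the (d+1)-dimensional filling function of a module of type
`FP_{d+1}`, expressed via two consecutive maps of a partial free resolution:
`ℤ[S₂] → ℤ[S₁] → ℤ[S₀]` with free G-sets with finitely many orbits, `ψ ∘ φ = 0`
and `ker ψ ⊆ im φ`.  Every `ψ`-cycle of ℓ1-norm at most `n` has a `φ`-filling of
ℓ1-norm at most `B = B(n)`. -/
theorem stmt_0 {G S₂ S₁ S₀ : Type*} [Group G]
    [MulAction G S₂] [MulAction G S₁] [MulAction G S₀]
    (hfree₂ : ∀ g : G, g ≠ 1 → ∀ s : S₂, g • s ≠ s)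
    (hfree₁ : ∀ g : G, g ≠ 1 → ∀ s : S₁, g • s ≠ s)
    (hfree₀ : ∀ g : G, g ≠ 1 → ∀ s : S₀, g • s ≠ s)
    (horb₂ : FinitelyManyOrbits G S₂) (horb₁ : FinitelyManyOrbits G S₁)
    (horb₀ : FinitelyManyOrbits G S₀)
    (φ : (S₂ →₀ ℤ) →+ (S₁ →₀ ℤ)) (ψ : (S₁ →₀ ℤ) →+ (S₀ →₀ ℤ))
    (hφ : Equivariant G φ) (hψ : Equivariant G ψ)
    (hcomp : ∀ y : S₂ →₀ ℤ, ψ (φ y) = 0)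
    (hexact : ∀ x : S₁ →₀ ℤ, ψ x = 0 → ∃ y : S₂ →₀ ℤ, φ y = x) :
    ∀ n : ℕ, ∃ B : ℕ, ∀ x : S₁ →₀ ℤ, ψ x = 0 → l1 x ≤ n →
      ∃ y : S₂ →₀ ℤ, φ y = x ∧ l1 y ≤ B := by
  classical
  have hfin := aux_finite_t hfree₀ horb₁ ψ hψ
  obtain ⟨R, hR⟩ := horb₁
  intro n
  induction n with
  | zero =>
    refine ⟨0, fun x _ hl => ⟨0, ?_, by simp [l1]⟩⟩
    ext s
    have := aux_le_l1 x s
    simp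
    omega
  | succ n ih =>
    obtain ⟨B, hB⟩ := ih
    obtain ⟨F', hF'⟩ := aux_grow ψ hfin (n + 1) R
    have hfill : ∀ z : S₁ →₀ ℤ, ∃ y : S₂ →₀ ℤ, ψ z = 0 → φ y = z := by
      intro z
      by_cases hz : ψ z = 0
      · obtain ⟨y, hy⟩ := hexact z hz
        exact ⟨y, fun _ => hy⟩
      · exact ⟨0, fun h => absurd h hz⟩
    choose f hf using hfill
    let Z : Finset (S₁ →₀ ℤ) :=
      Finset.finsupp F' (fun _ => Finset.Icc (-((n : ℤ) + 1)) ((n : ℤ) + 1))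
    refine ⟨Z.sup (fun z => l1 (f z)) + B, ?_⟩
    -- the case where the support meets `R`
    have key : ∀ x : S₁ →₀ ℤ, ψ x = 0 → l1 x ≤ n + 1 → (∃ r ∈ R, x r ≠ 0) →
        ∃ y : S₂ →₀ ℤ, φ y = x ∧ l1 y ≤ Z.sup (fun z => l1 (f z)) + B := by
      rintro x hx hl ⟨r, hr, hxr⟩
      obtain ⟨A, hRA, hAF, hA⟩ := hF' x hx
        ((Finset.card_le_card Finset.sdiff_subset).trans ((aux_card_le x).trans hl))
      have hdec := Finsupp.filter_add_filter_not x (· ∈ A)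
      have hl1 := aux_l1_filter x (· ∈ A)
      have hr1 := aux_le_l1 (x.filter (· ∈ A)) r
      rw [Finsupp.filter_apply_pos _ _ (hRA hr)] at hr1
      have hA' : ψ (x.filter fun s => ¬ s ∈ A) = 0 := by
        have := congrArg ψ hdec
        rwa [map_add, hA, hx, zero_add] at this
      obtain ⟨y, hy, hyB⟩ := hB _ hA' (by omega)
      have hz : x.filter (· ∈ A) ∈ Z := by
        rw [Finset.mem_finsupp_iff]
        refine ⟨?_, ?_⟩
        · intro s hs
          rw [Finsupp.support_filter, Finset.mem_filter] at hs
          exact hAF hs.2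
        · intro s _
          have := aux_le_l1 (x.filter (· ∈ A)) s
          rw [Finset.mem_Icc]
          omega
      refine ⟨f (x.filter (· ∈ A)) + y, ?_, ?_⟩
      · rw [map_add, hf _ hA, hy, hdec]
      · have h1 := Finset.le_sup (f := fun z => l1 (f z)) hz
        exact (aux_l1_add _ _).trans (Nat.add_le_add h1 hyB)
    intro x hx hl
    by_cases hx0 : x = 0
    · exact ⟨0, by simp [hx0], by simp [l1]⟩
    · obtain ⟨s, hs⟩ := Finsupp.ne_iff.1 hx0
      obtain ⟨g, r, hr, rfl⟩ := hR s
      obtain ⟨y, hy, hyB⟩ := key (gact g⁻¹ x) (by rw [hψ, hx, aux_gact_zero])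
        (by rw [aux_l1_gact]; exact hl) ⟨r, hr, by simpa [aux_gact_apply] using hs⟩
      exact ⟨gact g y, by rw [hφ, hy, aux_gact_inv], by rw [aux_l1_gact]; exact hyB⟩
end

section
/- Let G be a group, S and T G-sets, and ρ : ℤ[S] → ℤ[T] a G-equivariant additive homomorphism. If z ∈ ker ρ and z ≠ 0, then there exists x ∈ ℤ[S] such that: (1) x ⪯_S z (in particular ‖z − x‖_S < ‖z‖_S); (2) x ∈ ker ρ; and (3) x is ρ-connected. -/
open Finsupp

theorem isPart_iff_aux {S : Type*} (x z : S →₀ ℤ) :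
    IsPart x z ↔ ∀ s, (0 ≤ x s ∧ x s ≤ z s) ∨ (z s ≤ x s ∧ x s ≤ 0) := by
  unfold IsPart
  refine forall_congr' fun s => ?_
  constructor
  · intro h
    rcases lt_trichotomy (x s) 0 with h0 | h0 | h0
    · right
      constructor <;> nlinarith
    · rw [h0]
      rcases le_total 0 (z s) with h1 | h1
      · left; exact ⟨le_refl _, h1⟩
      · right; exact ⟨h1, le_refl _⟩
    · left
      constructor <;> nlinarith
  · rintro (⟨h1, h2⟩ | ⟨h1, h2⟩) <;> nlinarith

theorem l1_eq_sum_aux {S : Type*} (x : S →₀ ℤ) (A : Finset S) (h : x.support ⊆ A) :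
    l1 x = ∑ s ∈ A, (x s).natAbs := by
  unfold l1
  refine Finset.sum_subset h fun s _ hs => ?_
  simpa using hs

theorem l1_lt_aux {S : Type*} (x z : S →₀ ℤ) (h : IsPart x z) (s : S) (hs : x s ≠ 0) :
    l1 (z - x) < l1 z := by
  classical
  rw [isPart_iff_aux] at h
  have hsz : z.support ⊆ z.support := Finset.Subset.refl _
  have hsub : (z - x).support ⊆ z.support := by
    intro t ht
    have := h t
    simp only [Finsupp.mem_support_iff, Finsupp.sub_apply] at *
    omega
  rw [l1_eq_sum_aux _ _ hsub, l1_eq_sum_aux _ _ hsz]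
  apply Finset.sum_lt_sum
  · intro t _
    have := h t
    simp only [Finsupp.sub_apply]
    omega
  · refine ⟨s, ?_, ?_⟩
    · have := h s
      simp only [Finsupp.mem_support_iff]
      omega
    · have := h s
      simp only [Finsupp.sub_apply]
      omega

/-- The basis part of `z` at a point of its support. -/
theorem exists_part_basis {S : Type*} (z : S →₀ ℤ) (s : S) (hs : z s ≠ 0) :
    IsPart (Finsupp.single s (SignType.sign (z s) : ℤ)) z ∧
      InD1 (Finsupp.single s (SignType.sign (z s) : ℤ)) ∧
      l1 (z - Finsupp.single s (SignType.sign (z s) : ℤ)) < l1 z := by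
  classical
  have hp : IsPart (Finsupp.single s (SignType.sign (z s) : ℤ)) z := by
    rw [isPart_iff_aux]
    intro t
    by_cases hst : s = t
    · subst hst
      rcases lt_or_gt_of_ne hs with h | h
      · simp [sign_neg h]; omega
      · simp [sign_pos h]; omega
    · simp [Finsupp.single_apply, hst]; omega
  refine ⟨hp, ⟨s, ?_⟩, l1_lt_aux _ _ hp s ?_⟩
  · rcases lt_or_gt_of_ne hs with h | h
    · right; simp [sign_neg h]
    · left; simp [sign_pos h]
  · rcases lt_or_gt_of_ne hs with h | h
    · simp [sign_neg h]
    · simp [sign_pos h]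

theorem exists_part_sign {S : Type*} (z : S →₀ ℤ) (s : S) (hs : z s ≠ 0) :
    ∃ y : S →₀ ℤ, InD1 y ∧ IsPart y z ∧ l1 (z - y) < l1 z :=
  ⟨_, (exists_part_basis z s hs).2.1, (exists_part_basis z s hs).1, (exists_part_basis z s hs).2.2⟩

theorem exists_part_rho {S T : Type*} (ρ : (S →₀ ℤ) →+ (T →₀ ℤ)) (x : S →₀ ℤ) (t : T) (e : ℤ)
    (h : 0 < ρ x t * e) :
    ∃ y : S →₀ ℤ, InD1 y ∧ IsPart y x ∧ l1 (x - y) < l1 x ∧ 0 < ρ y t * e := by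
  have key : ∀ (s : S) (a : ℤ), ρ (Finsupp.single s a) t = a * ρ (Finsupp.single s 1) t := by
    intro s a
    have : Finsupp.single s a = a • Finsupp.single s (1 : ℤ) := by simp
    rw [this, map_zsmul]
    simp
  have hx : ρ x t * e = ∑ s ∈ x.support, x s * ρ (Finsupp.single s 1) t * e := by
    conv_lhs => rw [← Finsupp.sum_single x]
    rw [Finsupp.sum, map_sum, Finsupp.finsetSum_apply, Finset.sum_mul]
    exact Finset.sum_congr rfl fun s _ => by rw [key]
  rw [hx] at h
  obtain ⟨s, hs, hpos⟩ := Finset.exists_lt_of_sum_lt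
    (f := fun _ => (0 : ℤ)) (by simpa using h)
  have hs0 : x s ≠ 0 := by simpa using hs
  obtain ⟨h1, h2, h3⟩ := exists_part_basis x s hs0
  refine ⟨_, h2, h1, h3, ?_⟩
  rw [key]
  rcases lt_or_gt_of_ne hs0 with h | h
  · simp [sign_neg h]; nlinarith
  · simp [sign_pos h]; nlinarith

theorem extend_part {S T : Type*} (ρ : (S →₀ ℤ) →+ (T →₀ ℤ)) (z : S →₀ ℤ) (hz : ρ z = 0) :
    ∀ (N : ℕ) (x : S →₀ ℤ), l1 (z - x) ≤ N → IsPart x z → l1 (z - x) < l1 z →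
      RhoConnected ρ x →
      ∃ x : S →₀ ℤ, (IsPart x z ∧ l1 (z - x) < l1 z) ∧ ρ x = 0 ∧ RhoConnected ρ x := by
  intro N
  induction N with
  | zero =>
    intro x hN hp hl hc
    refine ⟨x, ⟨hp, hl⟩, ?_, hc⟩
    by_contra h0
    obtain ⟨t, ht⟩ := Finsupp.ne_iff.mp h0
    have ht' : ρ x t ≠ 0 := by simpa using ht
    obtain ⟨y, -, -, hy, -⟩ := exists_part_rho ρ (z - x) t (-ρ x t) (by
      rw [map_sub, hz]; simp; positivity)
    omega
  | succ N ih =>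
    intro x hN hp hl hc
    by_cases h0 : ρ x = 0
    · exact ⟨x, ⟨hp, hl⟩, h0, hc⟩
    obtain ⟨t, ht⟩ := Finsupp.ne_iff.mp h0
    have ht' : ρ x t ≠ 0 := by simpa using ht
    obtain ⟨y, hy1, hyp, hyl, hyt⟩ := exists_part_rho ρ (z - x) t (-ρ x t) (by
      rw [map_sub, hz]; simp; positivity)
    obtain ⟨w, hw1, hwp, -, hwt⟩ := exists_part_rho ρ x t (ρ x t) (mul_self_pos.mpr ht')
    have hlt : l1 (z - (x + y)) < l1 (z - x) := by rwa [← sub_sub]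
    have hp2 := (isPart_iff_aux _ _).mp hp
    have hyp2 := (isPart_iff_aux _ _).mp hyp
    refine ih (x + y) (by omega) ?_ (by omega) ?_
    · rw [isPart_iff_aux]
      intro s
      have h1 := hp2 s
      have h2 := hyp2 s
      simp only [Finsupp.sub_apply, Finsupp.add_apply] at *
      omega
    · obtain ⟨n, hn, c, hc1, hcx, hck⟩ := hc
      have hsum : ∀ k ≤ n, ∑ i ∈ Finset.range k, Function.update c n y i
          = ∑ i ∈ Finset.range k, c i := by
        intro k hk
        refine Finset.sum_congr rfl fun i hi => ?_
        have := Finset.mem_range.mp hi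
        rw [Function.update_of_ne (by omega)]
      refine ⟨n + 1, by omega, Function.update c n y, ?_, ?_, ?_⟩
      · intro i hi
        by_cases hin : i = n
        · subst hin; simpa using hy1
        · rw [Function.update_of_ne hin]; exact hc1 i (by omega)
      · rw [Finset.sum_range_succ, hsum n le_rfl, Function.update_self, ← hcx]
      · intro k hk1 hk2
        rw [hsum k (by omega)]
        by_cases hkn : k = n
        · subst hkn
          rw [Function.update_self, ← hcx]
          refine ⟨?_, w, y, hw1, hy1, hwp, ?_, t, ?_⟩
          · intro s
            have h1 := hp2 s
            have h2 := hyp2 s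
            simp only [Finsupp.sub_apply] at h2
            rcases h1 with h1 | h1
            · exact mul_nonneg (by omega) (by omega)
            · exact mul_nonneg_of_nonpos_of_nonpos (by omega) (by omega)
          · intro s
            rw [pow_two]
          · rcases lt_or_gt_of_ne ht' with h | h
            · have a : ρ w t < 0 := by nlinarith
              have b : 0 < ρ y t := by nlinarith
              exact mul_neg_of_neg_of_pos a b
            · have a : 0 < ρ w t := by nlinarith
              have b : ρ y t < 0 := by nlinarith
              exact mul_neg_of_pos_of_neg a b
        · rw [Function.update_of_ne hkn]
          exact hck k hk1 (by omega)

/-- Lemma 4: every nonzero kernel element has a ρ-connected part in the kernel. -/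
theorem stmt_3 {G S T : Type*} [Group G] [MulAction G S] [MulAction G T]
    (ρ : (S →₀ ℤ) →+ (T →₀ ℤ)) (hρ : Equivariant G ρ)
    (z : S →₀ ℤ) (hz : ρ z = 0) (hz0 : z ≠ 0) :
    ∃ x : S →₀ ℤ, (IsPart x z ∧ l1 (z - x) < l1 z) ∧ ρ x = 0 ∧ RhoConnected ρ x := by
  obtain ⟨s, hs⟩ := Finsupp.ne_iff.mp hz0
  obtain ⟨y, hy1, hyp, hyn⟩ := exists_part_sign z s hs
  have hconn : RhoConnected ρ y := by
    refine ⟨1, le_refl _, fun _ => y, fun _ _ => hy1, by simp, ?_⟩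
    intro k h1 h2
    omega
  exact extend_part ρ z hz _ y le_rfl hyp hyn hconn
end

section
/- Let G be a group, S and T G-sets, and ρ : ℤ[S] → ℤ[T] a G-equivariant additive homomorphism. For every nonzero z ∈ ker ρ there exist ρ-connected elements x₁, …, x_n ∈ ker ρ such that (1) z = x₁ + ⋯ + x_n, and (2) x_i ⪯_S z for each i. -/
open Finsupp

theorem part_iff (a b : ℤ) : a ^ 2 ≤ a * b ↔ (0 ≤ a ∧ a ≤ b) ∨ (b ≤ a ∧ a ≤ 0) ∨ a = 0 := by
  constructor
  · intro h
    rcases lt_trichotomy a 0 with h0 | h0 | h0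
    · right; left; exact ⟨by nlinarith, h0.le⟩
    · right; right; exact h0
    · left; exact ⟨h0.le, by nlinarith⟩
  · rintro (⟨h1, h2⟩ | ⟨h1, h2⟩ | h)
    · nlinarith
    · nlinarith
    · simp [h]

theorem isPart_iff {S : Type*} (x y : S →₀ ℤ) :
    IsPart x y ↔ ∀ s, (0 ≤ x s ∧ x s ≤ y s) ∨ (y s ≤ x s ∧ x s ≤ 0) ∨ x s = 0 := by
  unfold IsPart
  exact forall_congr' fun s => part_iff _ _

theorem InD1.exists_ne {S : Type*} {x : S →₀ ℤ} (h : InD1 x) : ∃ s, x s ≠ 0 := by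
  obtain ⟨s, rfl | rfl⟩ := h <;> exact ⟨s, by simp⟩

theorem l1_sub_lt {S : Type*} {x y : S →₀ ℤ} (h : IsPart x y) (hx : InD1 x) :
    l1 (y - x) < l1 y := by
  rw [isPart_iff] at h
  obtain ⟨s, hs⟩ := hx.exists_ne
  have hsub : (y - x).support ⊆ y.support := by
    intro t
    have := h t
    simp only [Finsupp.mem_support_iff, Finsupp.sub_apply]
    omega
  have e : l1 (y - x) = ∑ t ∈ y.support, ((y - x) t).natAbs := by
    unfold l1
    refine Finset.sum_subset hsub ?_
    intro t _ ht
    simpa using ht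
  rw [e]
  unfold l1
  refine Finset.sum_lt_sum ?_ ⟨s, ?_, ?_⟩
  · intro t _
    have := h t
    simp only [Finsupp.sub_apply]
    omega
  · have := h s
    simp only [Finsupp.mem_support_iff]
    omega
  · have := h s
    simp only [Finsupp.sub_apply]
    omega

theorem exists_unit_part {S : Type*} (f : (S →₀ ℤ) →+ ℤ) (y : S →₀ ℤ) (h : 0 < f y) :
    ∃ y₁, InD1 y₁ ∧ IsPart y₁ y ∧ 0 < f y₁ := by
  classical
  have hsm : ∀ s (n : ℤ), f (Finsupp.single s n) = n * f (Finsupp.single s 1) := by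
    intro s n
    rw [← smul_eq_mul, ← map_zsmul]
    simp
  have e : f y = ∑ s ∈ y.support, y s * f (Finsupp.single s 1) := by
    conv_lhs => rw [← Finsupp.sum_single y]
    rw [Finsupp.sum, map_sum]
    exact Finset.sum_congr rfl fun s _ => hsm s _
  rw [e] at h
  obtain ⟨s, _, hs⟩ := Finset.exists_lt_of_sum_lt (s := y.support) (f := fun _ => (0 : ℤ))
    (g := fun s => y s * f (Finsupp.single s 1)) (by simpa using h)
  rcases lt_trichotomy (y s) 0 with h0 | h0 | h0
  · refine ⟨Finsupp.single s (-1), ⟨s, Or.inr rfl⟩, ?_, ?_⟩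
    · rw [isPart_iff]
      intro t
      by_cases hst : s = t
      · subst hst; simp; omega
      · simp [hst]
    · rw [hsm]; nlinarith
  · simp [h0] at hs
  · refine ⟨Finsupp.single s 1, ⟨s, Or.inl rfl⟩, ?_, ?_⟩
    · rw [isPart_iff]
      intro t
      by_cases hst : s = t
      · subst hst; simp; omega
      · simp [hst]
    · nlinarith

theorem exists_pair {S T : Type*} (ρ : (S →₀ ℤ) →+ (T →₀ ℤ)) (x y : S →₀ ℤ)
    (hx : ρ x ≠ 0) (hxy : ρ x + ρ y = 0) :
    ∃ x₁ y₁, InD1 x₁ ∧ InD1 y₁ ∧ IsPart x₁ x ∧ IsPart y₁ y ∧ ∃ t, ρ x₁ t * ρ y₁ t < 0 := by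
  obtain ⟨t, ht⟩ := Finsupp.ne_iff.mp hx
  have hs : ρ x t + ρ y t = 0 := by rw [← Finsupp.add_apply, hxy]; rfl
  let f : (S →₀ ℤ) →+ ℤ := (Finsupp.applyAddHom t).comp ρ
  have hf : ∀ w, f w = ρ w t := fun w => rfl
  have hg : ∀ w, (-f) w = - ρ w t := fun w => rfl
  simp only [Finsupp.coe_zero, Pi.zero_apply] at ht
  rcases lt_or_gt_of_ne ht with h | h
  · obtain ⟨x₁, a1, a2, a3⟩ := exists_unit_part (-f) x (by rw [hg]; omega)
    obtain ⟨y₁, b1, b2, b3⟩ := exists_unit_part f y (by rw [hf]; omega)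
    rw [hg] at a3
    rw [hf] at b3
    exact ⟨x₁, y₁, a1, b1, a2, b2, t, by nlinarith⟩
  · obtain ⟨x₁, a1, a2, a3⟩ := exists_unit_part f x (by rw [hf]; omega)
    obtain ⟨y₁, b1, b2, b3⟩ := exists_unit_part (-f) y (by rw [hg]; omega)
    rw [hf] at a3
    rw [hg] at b3
    exact ⟨x₁, y₁, a1, b1, a2, b2, t, by nlinarith⟩

theorem RhoConnected.extend {S T : Type*} {ρ : (S →₀ ℤ) →+ (T →₀ ℤ)} {x y : S →₀ ℤ}
    (hx : RhoConnected ρ x) (hy : InD1 y) (h1 : SIntTrivial x y) (h2 : RhoInt ρ x y) :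
    RhoConnected ρ (x + y) := by
  obtain ⟨n, hn, c, hc, rfl, hk⟩ := hx
  have key : ∀ k ≤ n, ∑ i ∈ Finset.range k, (if i < n then c i else y)
      = ∑ i ∈ Finset.range k, c i := by
    intro k hkn
    refine Finset.sum_congr rfl fun i hi => ?_
    rw [if_pos (by have := Finset.mem_range.mp hi; omega)]
  refine ⟨n + 1, by omega, fun i => if i < n then c i else y, ?_, ?_, ?_⟩
  · intro i _
    by_cases h : i < n
    · simpa [h] using hc i h
    · simpa [h] using hy
  · rw [Finset.sum_range_succ, key n le_rfl]; simp
  · intro k k1 k2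
    rw [key k (by omega)]
    by_cases h : k < n
    · simpa [h] using hk k k1 h
    · obtain rfl : k = n := by omega
      simpa using ⟨h1, h2⟩

theorem exists_connected_ker {S T : Type*} (ρ : (S →₀ ℤ) →+ (T →₀ ℤ))
    (z : S →₀ ℤ) (hz : ρ z = 0) (hz0 : z ≠ 0) :
    ∃ x, RhoConnected ρ x ∧ IsPart x z ∧ l1 (z - x) < l1 z ∧ ρ x = 0 := by
  suffices H : ∀ m : ℕ, ∀ x, RhoConnected ρ x → IsPart x z → l1 (z - x) < l1 z →
      l1 (z - x) = m → ∃ x, RhoConnected ρ x ∧ IsPart x z ∧ l1 (z - x) < l1 z ∧ ρ x = 0 by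
    obtain ⟨s, hs⟩ := Finsupp.ne_iff.mp hz0
    simp only [Finsupp.coe_zero, Pi.zero_apply] at hs
    obtain ⟨x, h1, h2⟩ : ∃ x, InD1 x ∧ IsPart x z := by
      rcases lt_or_gt_of_ne hs with h | h
      · obtain ⟨x, a, b, _⟩ := exists_unit_part (-(Finsupp.applyAddHom s)) z
          (by change 0 < - z s; omega)
        exact ⟨x, a, b⟩
      · obtain ⟨x, a, b, _⟩ := exists_unit_part (Finsupp.applyAddHom s) z h
        exact ⟨x, a, b⟩
    refine H _ x ⟨1, le_rfl, fun _ => x, fun _ _ => h1, by simp, ?_⟩ h2 (l1_sub_lt h2 h1) rfl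
    intro k _ _
    omega
  intro m
  induction m using Nat.strong_induction_on with
  | _ m ih =>
    intro x hx hp hl hm
    by_cases h0 : ρ x = 0
    · exact ⟨x, hx, hp, hl, h0⟩
    obtain ⟨x₁, y₁, a1, b1, a2, b2, t, ht⟩ := exists_pair ρ x (z - x) h0 (by simp [hz])
    have hlt := l1_sub_lt b2 b1
    have e : z - x - y₁ = z - (x + y₁) := by abel
    rw [e] at hlt
    have hp' := (isPart_iff _ _).mp hp
    have b2' := (isPart_iff _ _).mp b2
    simp only [Finsupp.sub_apply] at b2'
    refine ih _ (by omega) (x + y₁) (hx.extend b1 ?_ ?_) ?_ (by omega) rfl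
    · intro s
      have h1 := hp' s
      have h2 := b2' s
      have : (0 ≤ x s ∧ 0 ≤ y₁ s) ∨ (x s ≤ 0 ∧ y₁ s ≤ 0) := by omega
      rcases this with h | h
      · exact mul_nonneg h.1 h.2
      · exact mul_nonneg_of_nonpos_of_nonpos h.1 h.2
    · exact ⟨x₁, y₁, a1, b1, a2, fun s => by rw [sq], t, ht⟩
    · rw [isPart_iff]
      intro s
      have h1 := hp' s
      have h2 := b2' s
      simp only [Finsupp.add_apply]
      omega

theorem decomp {S T : Type*} (ρ : (S →₀ ℤ) →+ (T →₀ ℤ)) (m : ℕ) :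
    ∀ z : S →₀ ℤ, l1 z = m → ρ z = 0 → ∃ (n : ℕ) (x : Fin n → (S →₀ ℤ)),
      (∀ i, RhoConnected ρ (x i)) ∧ (∀ i, ρ (x i) = 0) ∧
      z = ∑ i, x i ∧ (∀ i, IsPart (x i) z) := by
  induction m using Nat.strong_induction_on with
  | _ m ih =>
    intro z hm hz
    by_cases hz0 : z = 0
    · exact ⟨0, Fin.elim0, fun i => i.elim0, fun i => i.elim0, by simp [hz0], fun i => i.elim0⟩
    obtain ⟨x, h1, h2, h3, h4⟩ := exists_connected_ker ρ z hz hz0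
    obtain ⟨n, w, w1, w2, w3, w4⟩ := ih _ (by omega) (z - x) rfl (by simp [hz, h4])
    refine ⟨n + 1, Fin.cons x w, ?_, ?_, ?_, ?_⟩
    · intro i; refine Fin.cases ?_ ?_ i
      · simpa using h1
      · simpa using w1
    · intro i; refine Fin.cases ?_ ?_ i
      · simpa using h4
      · simpa using w2
    · rw [Fin.sum_cons, ← w3]; abel
    · intro i; refine Fin.cases ?_ ?_ i
      · simpa using h2
      · intro j
        rw [Fin.cons_succ, isPart_iff]
        intro s
        have a := (isPart_iff _ _).mp h2 s
        have b := (isPart_iff _ _).mp (w4 j) s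
        simp only [Finsupp.sub_apply] at b
        omega

/-- Proposition: decomposition of kernel elements into ρ-connected parts. -/
theorem stmt_4 {G S T : Type*} [Group G] [MulAction G S] [MulAction G T]
    (ρ : (S →₀ ℤ) →+ (T →₀ ℤ)) (hρ : Equivariant G ρ)
    (z : S →₀ ℤ) (hz : ρ z = 0) (hz0 : z ≠ 0) :
    ∃ (n : ℕ) (x : Fin n → (S →₀ ℤ)),
      (∀ i, RhoConnected ρ (x i)) ∧ (∀ i, ρ (x i) = 0) ∧
      z = ∑ i, x i ∧ (∀ i, IsPart (x i) z) := by
  exact decomp ρ _ z rfl hz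
end

section
/- Let G be a group, S and T G-sets, and ρ : ℤ[S] → ℤ[T] a G-equivariant additive homomorphism. Suppose that S has finitely many G-orbits and that the stabilizer in G of each element of T is finite. Then for every t ∈ T the set S(t) = {s ∈ S : ⟨ρ(s), t⟩ ≠ 0} is finite. -/
open Finsupp

/-- Lemma: the set `S(t) = {s ∈ S : ⟨ρ(s), t⟩ ≠ 0}` is finite. -/
theorem stmt_7 {G S T : Type*} [Group G] [MulAction G S] [MulAction G T]
    (ρ : (S →₀ ℤ) →+ (T →₀ ℤ)) (hρ : Equivariant G ρ)
    (hS : FinitelyManyOrbits G S) (hstab : FiniteStabilizers G T) :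
    ∀ t : T, {s : S | ρ (Finsupp.single s 1) t ≠ 0}.Finite := by
  intro t
  obtain ⟨R, hR⟩ := hS
  have hfin : ∀ u : T, {g : G | g • u = t}.Finite := by
    intro u
    by_cases h : ∃ g₀ : G, g₀ • u = t
    · obtain ⟨g₀, h₀⟩ := h
      refine ((hstab u).image (fun g => g₀ * g)).subset ?_
      intro g hg
      have hg' : g • u = t := hg
      refine ⟨g₀⁻¹ * g, ?_, by simp⟩
      change (g₀⁻¹ * g) • u = u
      rw [mul_smul, hg', ← h₀, inv_smul_smul]
    · refine Set.finite_empty.subset ?_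
      intro g hg
      exact (h ⟨g, hg⟩).elim
  have hU : (⋃ r ∈ R, ⋃ u ∈ (ρ (Finsupp.single r 1)).support,
      (fun g : G => g • r) '' {g : G | g • u = t}).Finite := by
    refine Set.Finite.biUnion R.finite_toSet (fun r _ => ?_)
    exact Set.Finite.biUnion (Finset.finite_toSet _) (fun u _ => (hfin u).image _)
  refine hU.subset ?_
  intro s hs
  obtain ⟨g, r, hr, rfl⟩ := hR s
  have hs' : ρ (Finsupp.single (g • r) 1) t ≠ 0 := hs
  have e : gact g (Finsupp.single r (1 : ℤ)) = Finsupp.single (g • r) 1 := by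
    simp [gact, Finsupp.equivMapDomain_single]
  rw [← e, hρ] at hs'
  have hs2 : ρ (Finsupp.single r 1) (g⁻¹ • t) ≠ 0 := hs'
  simp only [Set.mem_iUnion]
  exact ⟨r, hr, g⁻¹ • t, Finsupp.mem_support_iff.2 hs2, g, smul_inv_smul g t, rfl⟩
end

section
/- Let G be a group, S and T G-sets, and ρ : ℤ[S] → ℤ[T] a G-equivariant additive homomorphism. Suppose that S has finitely many G-orbits and that the stabilizer in G of each element of T is finite. Then for every integer n ≥ 1 and every y ∈ D_n, the set {x ∈ D₁ : x ∩_ρ y ≠ ∅} is finite. -/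
open Finsupp

theorem trans_finite_aux {G T : Type*} [Group G] [MulAction G T]
    (hstab : FiniteStabilizers G T) (u t : T) : {g : G | g • u = t}.Finite := by
  by_cases h : ∃ g₀ : G, g₀ • u = t
  · obtain ⟨g₀, h₀⟩ := h
    refine ((hstab u).image (fun g => g₀ * g)).subset ?_
    intro g hg
    refine ⟨g₀⁻¹ * g, ?_, by simp⟩
    simp only [Set.mem_setOf_eq] at hg ⊢
    rw [mul_smul, hg, ← h₀, inv_smul_smul]
  · refine Set.finite_empty.subset ?_
    intro g hg
    exact h ⟨g, hg⟩

theorem fiber_finite_aux {G S T : Type*} [Group G] [MulAction G S] [MulAction G T]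
    (ρ : (S →₀ ℤ) →+ (T →₀ ℤ)) (hρ : Equivariant G ρ)
    (hS : FinitelyManyOrbits G S) (hstab : FiniteStabilizers G T) (t : T) :
    {s : S | ρ (Finsupp.single s 1) t ≠ 0}.Finite := by
  obtain ⟨R, hR⟩ := hS
  have hfin : (⋃ r ∈ R, ⋃ u ∈ (ρ (Finsupp.single r 1)).support,
      (fun g : G => g • r) '' {g : G | g • u = t}).Finite :=
    R.finite_toSet.biUnion fun r _ =>
      (ρ (Finsupp.single r 1)).support.finite_toSet.biUnion fun u _ =>
        (trans_finite_aux hstab u t).image _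
  refine hfin.subset ?_
  intro s hs
  obtain ⟨g, r, hr, rfl⟩ := hR s
  simp only [Set.mem_setOf_eq] at hs
  have h1 : (Finsupp.single (g • r) 1 : S →₀ ℤ) = gact g (Finsupp.single r 1) := by
    simp [gact, Finsupp.equivMapDomain_single]
  rw [h1, hρ] at hs
  have h2 : ρ (Finsupp.single r 1) (g⁻¹ • t) ≠ 0 := hs
  simp only [Set.mem_iUnion]
  exact ⟨r, hr, g⁻¹ • t, Finsupp.mem_support_iff.2 h2, g, by simp, rfl⟩

theorem part_aux {S : Type*} {x y : S →₀ ℤ} (s : S)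
    (hx : x = Finsupp.single s 1 ∨ x = Finsupp.single s (-1)) (h : IsPart x y) : y s ≠ 0 := by
  intro h0
  have := h s
  rw [h0] at this
  rcases hx with rfl | rfl <;> simp at this

theorem rho_aux {S T : Type*} (ρ : (S →₀ ℤ) →+ (T →₀ ℤ)) {x : S →₀ ℤ} (s : S) (t : T)
    (hx : x = Finsupp.single s 1 ∨ x = Finsupp.single s (-1)) (h : ρ x t ≠ 0) :
    ρ (Finsupp.single s 1) t ≠ 0 := by
  rcases hx with rfl | rfl
  · exact h
  · rw [Finsupp.single_neg, map_neg] at h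
    simpa using h

/-- Lemma: for `y ∈ D_n`, the set of elements of `D₁` having nontrivial
ρ-intersection with `y` is finite. -/
theorem stmt_8 {G S T : Type*} [Group G] [MulAction G S] [MulAction G T]
    (ρ : (S →₀ ℤ) →+ (T →₀ ℤ)) (hρ : Equivariant G ρ)
    (hS : FinitelyManyOrbits G S) (hstab : FiniteStabilizers G T) :
    ∀ n : ℕ, 1 ≤ n → ∀ y : S →₀ ℤ, InD ρ n y →
      {x : S →₀ ℤ | InD1 x ∧ RhoInt ρ x y}.Finite := by
  intro n _ y _
  have hfin : (⋃ s ∈ y.support, ⋃ t ∈ (ρ (Finsupp.single s 1)).support,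
      {s : S | ρ (Finsupp.single s 1) t ≠ 0}).Finite :=
    y.support.finite_toSet.biUnion fun s _ =>
      (ρ (Finsupp.single s 1)).support.finite_toSet.biUnion fun t _ =>
        fiber_finite_aux ρ hρ hS hstab t
  refine ((hfin.image fun s => Finsupp.single s (1 : ℤ)).union
    (hfin.image fun s => Finsupp.single s (-1 : ℤ))).subset ?_
  rintro x ⟨⟨a, ha⟩, x₁, y₁, ⟨a', ha'⟩, ⟨b, hb⟩, hpx, hpy, t, ht⟩
  have hx := part_aux a' ha' hpx
  have haa : a' = a := by
    by_contra hne
    apply hx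
    rcases ha with rfl | rfl <;> simp [Finsupp.single_apply, Ne.symm hne]
  subst haa
  have hy := part_aux b hb hpy
  have h1 := rho_aux ρ a' t ha' (left_ne_zero_of_mul ht.ne)
  have h2 := rho_aux ρ b t hb (right_ne_zero_of_mul ht.ne)
  have hmem : a' ∈ (⋃ s ∈ y.support, ⋃ t ∈ (ρ (Finsupp.single s 1)).support,
      {s : S | ρ (Finsupp.single s 1) t ≠ 0}) := by
    simp only [Set.mem_iUnion]
    exact ⟨b, Finsupp.mem_support_iff.2 hy, t, Finsupp.mem_support_iff.2 h2, h1⟩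
  rcases ha with rfl | rfl
  · exact Or.inl ⟨a', hmem, rfl⟩
  · exact Or.inr ⟨a', hmem, rfl⟩
end
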